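/- Suppose the linear program (P) has an optimal solution, and denote its optimal value by v*. Then there exists a constant κ > 0 (depending only on M, v, f) such that for every ε > 0 and every pair (x̂, ẑ) ∈ ℝⁿ × ℝ^m satisfying (i) M x̂ ≥ f − ε e_m, (ii) ‖M^⊤ẑ − v‖_∞ ≤ ε and ẑ ≥ −ε e_m, and (iii) v^⊤x̂ − f^⊤ẑ ≤ ε, there exists an optimal solution x* of (P) (i.e., M x* ≥ f and v^⊤x* = v*) with ‖x* − x̂‖₁ ≤ ε κ. -/

import Mathlib

/-!
The proof rests on two facts.

*Weak duality with errors.* With the slack `s = M x₀ - f ≥ 0`, any `ẑ` satisfying the approximate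
dual constraints obeys `f ⬝ ẑ = x₀ ⬝ Mᵀẑ - s ⬝ ẑ ≤ v ⬝ x₀ + ε (‖x₀‖₁ + ∑ sᵢ)`. Together with the
small duality gap this bounds `v ⬝ x̂ - v*` by a constant multiple of `ε`, so no dual optimal
solution is needed.

*Hoffman's error bound* (`hoffman`). A point violating each inequality of a feasible system
`A x ≤ b` by at most `δ` lies within `κ δ` of a solution, `κ` being independent of the point and of
`δ`. The proof is by Fourier–Motzkin elimination: approximate solutions of the system project to
approximate solutions of the eliminated system, the induction hypothesis corrects the projection,
and the eliminated coordinate is then clamped to the interval the constraints leave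
for it (`exists_clamp`).

The theorem follows by applying the error bound to the optimal face `M x ≥ f`, `v ⬝ x ≤ v*`.
-/

open Matrix

/-- If every lower bound `l j` is at most every upper bound `u i`, and `t` violates each of these
bounds by at most `B`, then some `s` within `B` of `t` satisfies all of them. -/
lemma exists_clamp {P N : Type} [Fintype P] [Fintype N] (u : P → ℝ) (l : N → ℝ) (t B : ℝ)
    (hB : 0 ≤ B) (hlu : ∀ i j, l j ≤ u i) (hu : ∀ i, t ≤ u i + B) (hl : ∀ j, l j ≤ t + B) :
    ∃ s, (∀ i, s ≤ u i) ∧ (∀ j, l j ≤ s) ∧ |s - t| ≤ B := by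
  -- `s = min (max t (sup l)) (inf u)`; `Option` keeps the families nonempty.
  obtain ⟨p, hp⟩ : ∃ p, p = (Finset.univ : Finset (Option N)).sup' ⟨none, Finset.mem_univ _⟩
      (fun o => o.elim t l) := ⟨_, rfl⟩
  have hpt : t ≤ p := by
    rw [hp]
    exact Finset.le_sup' (fun o : Option N => o.elim t l) (Finset.mem_univ none)
  have hpl : ∀ j, l j ≤ p := by
    intro j
    rw [hp]
    exact Finset.le_sup' (fun o : Option N => o.elim t l) (Finset.mem_univ (some j))
  have hpB : p ≤ t + B := by
    rw [hp]
    refine Finset.sup'_le _ _ ?_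
    rintro (_ | j) -
    · simpa using hB
    · exact hl j
  obtain ⟨s, hs⟩ : ∃ s, s = (Finset.univ : Finset (Option P)).inf' ⟨none, Finset.mem_univ _⟩
      (fun o => o.elim p u) := ⟨_, rfl⟩
  have hsp : s ≤ p := by
    rw [hs]
    exact Finset.inf'_le (fun o : Option P => o.elim p u) (Finset.mem_univ none)
  have hge : ∀ c, c ≤ p → (∀ i, c ≤ u i) → c ≤ s := by
    intro c hc hcu
    rw [hs]
    refine Finset.le_inf' _ _ ?_
    rintro (_ | i) -
    · exact hc
    · exact hcu i
  refine ⟨s, fun i => ?_, fun j => hge _ (hpl j) fun i => hlu i j, ?_⟩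
  · rw [hs]
    exact Finset.inf'_le (fun o : Option P => o.elim p u) (Finset.mem_univ (some i))
  · have := hge (t - B) (by linarith) fun i => by linarith [hu i]
    rw [abs_le]
    constructor <;> linarith

lemma abs_dotProduct_sub_le {n : ℕ} (a x y : Fin n → ℝ) (D : ℝ) (h : ∀ k, |x k - y k| ≤ D) :
    |a ⬝ᵥ x - a ⬝ᵥ y| ≤ (∑ k, |a k|) * D := by
  rw [← dotProduct_sub, dotProduct, Finset.sum_mul]
  refine (Finset.abs_sum_le_sum_abs _ _).trans (Finset.sum_le_sum fun k _ => ?_)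
  rw [abs_mul]
  exact mul_le_mul_of_nonneg_left (h k) (abs_nonneg _)

/-- **Hoffman's error bound**, in the maximum norm, for a feasible system `A x ≤ b`. -/
theorem hoffman (n : ℕ) : ∀ (ι : Type) [Fintype ι] (A : ι → Fin n → ℝ) (b : ι → ℝ)
    (x0 : Fin n → ℝ), (∀ i, A i ⬝ᵥ x0 ≤ b i) →
    ∃ κ : ℝ, 0 ≤ κ ∧ ∀ δ : ℝ, 0 ≤ δ → ∀ xh : Fin n → ℝ, (∀ i, A i ⬝ᵥ xh ≤ b i + δ) →
      ∃ x : Fin n → ℝ, (∀ i, A i ⬝ᵥ x ≤ b i) ∧ ∀ k, |x k - xh k| ≤ κ * δ := by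
  induction n with
  | zero =>
    intro ι _ A b x0 h0
    exact ⟨0, le_rfl, fun δ _ xh _ => ⟨x0, h0, fun k => k.elim0⟩⟩
  | succ n ih =>
    intro ι _ A b x0 h0
    classical
    obtain ⟨a, ha⟩ : ∃ a : ι → ℝ, a = fun i => A i 0 := ⟨_, rfl⟩
    obtain ⟨R, hR⟩ : ∃ R : ι → Fin n → ℝ, R = fun i k => A i k.succ := ⟨_, rfl⟩
    have hsplit : ∀ i (x : Fin (n + 1) → ℝ),
        A i ⬝ᵥ x = a i * x 0 + R i ⬝ᵥ (fun k => x k.succ) := by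
      intro i x
      simp [dotProduct, Fin.sum_univ_succ, ha, hR]
    -- The `i`-th constraint reads as an upper bound `x 0 ≤ (b i - R i ⬝ y) / a i` if `a i > 0`,
    -- as a lower bound if `a i < 0`, and does not involve `x 0` if `a i = 0`.
    have hpos : ∀ i, 0 < a i → ∀ t c δ : ℝ,
        (a i * t + c ≤ b i + δ ↔ t ≤ (a i)⁻¹ * b i - (a i)⁻¹ * c + (a i)⁻¹ * δ) := by
      intro i hi t c δ
      rw [show (a i)⁻¹ * b i - (a i)⁻¹ * c + (a i)⁻¹ * δ = (b i + δ - c) / a i by ring,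
        le_div_iff₀ hi]
      constructor <;> intro h <;> linarith
    have hneg : ∀ i, a i < 0 → ∀ t c δ : ℝ,
        (a i * t + c ≤ b i + δ ↔ (a i)⁻¹ * b i - (a i)⁻¹ * c + (a i)⁻¹ * δ ≤ t) := by
      intro i hi t c δ
      rw [show (a i)⁻¹ * b i - (a i)⁻¹ * c + (a i)⁻¹ * δ = (b i + δ - c) / a i by ring,
        div_le_iff_of_neg hi]
      constructor <;> intro h <;> linarith
    let P := {i : ι // 0 < a i}
    let N := {i : ι // a i < 0}
    let Z := {i : ι // a i = 0}
    let A' : (P × N) ⊕ Z → Fin n → ℝ := Sum.elim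
      (fun q => (a q.1.1)⁻¹ • R q.1.1 - (a q.2.1)⁻¹ • R q.2.1) (fun z => R z.1)
    let b' : (P × N) ⊕ Z → ℝ := Sum.elim
      (fun q => (a q.1.1)⁻¹ * b q.1.1 - (a q.2.1)⁻¹ * b q.2.1) (fun z => b z.1)
    obtain ⟨S, hS⟩ : ∃ S : ℝ, S = ∑ i, |(a i)⁻¹| := ⟨_, rfl⟩
    have hS0 : 0 ≤ S := hS ▸ Finset.sum_nonneg fun i _ => abs_nonneg _
    have hSi : ∀ i, |(a i)⁻¹| ≤ S := fun i => hS ▸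
      Finset.single_le_sum (f := fun i => |(a i)⁻¹|) (fun i _ => abs_nonneg _) (Finset.mem_univ i)
    -- A violation by `δ` becomes one by at most `(1 + 2 S) δ` after elimination.
    have hproj : ∀ δ : ℝ, 0 ≤ δ → ∀ x : Fin (n + 1) → ℝ, (∀ i, A i ⬝ᵥ x ≤ b i + δ) →
        ∀ q, A' q ⬝ᵥ (fun k => x k.succ) ≤ b' q + (1 + 2 * S) * δ := by
      intro δ hδ x hx q
      have hSδ : 0 ≤ S * δ := mul_nonneg hS0 hδ
      rcases q with ⟨⟨i, hi⟩, ⟨j, hj⟩⟩ | ⟨z, hz⟩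
      · have h1 := hx i
        have h2 := hx j
        rw [hsplit, hpos i hi] at h1
        rw [hsplit, hneg j hj] at h2
        have h3 := mul_le_mul_of_nonneg_right ((le_abs_self _).trans (hSi i)) hδ
        have h4 := mul_le_mul_of_nonneg_right ((neg_le_abs _).trans (hSi j)) hδ
        simp only [A', b', Sum.elim_inl, sub_dotProduct, smul_dotProduct, smul_eq_mul]
        linarith
      · have h1 := hx z
        rw [hsplit, hz] at h1
        simp only [A', b', Sum.elim_inr]
        linarith
    obtain ⟨κ, hκ, H⟩ := ih ((P × N) ⊕ Z) A' b' (fun k => x0 k.succ) (fun q => by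
      simpa using hproj 0 le_rfl x0 (by simpa using h0) q)
    obtain ⟨D, hD⟩ : ∃ D : ℝ, D = κ * (1 + 2 * S) := ⟨_, rfl⟩
    have hD0 : 0 ≤ D := by rw [hD]; positivity
    let w : ι → ℝ := fun i => |(a i)⁻¹| * (1 + (∑ k, |R i k|) * D)
    have hw : ∀ i, 0 ≤ w i := fun i => by positivity
    obtain ⟨W, hW⟩ : ∃ W : ℝ, W = ∑ i, w i := ⟨_, rfl⟩
    have hW0 : 0 ≤ W := hW ▸ Finset.sum_nonneg fun i _ => hw i
    have hWi : ∀ i, w i ≤ W := fun i => hW ▸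
      Finset.single_le_sum (f := w) (fun i _ => hw i) (Finset.mem_univ i)
    refine ⟨D + W, by positivity, fun δ hδ xh hxh => ?_⟩
    obtain ⟨y, hy, hyd⟩ := H ((1 + 2 * S) * δ) (by positivity) _ (hproj δ hδ xh hxh)
    have hyd' : ∀ k, |y k - xh k.succ| ≤ D * δ := fun k => by
      rw [hD, mul_assoc]; exact hyd k
    -- Moving from `xh` to `y` shifts each bound on the first coordinate by at most `W δ`,
    -- the original violation included.
    have hshift : ∀ i, |(a i)⁻¹ * δ| + |(a i)⁻¹ * (R i ⬝ᵥ y - R i ⬝ᵥ fun k => xh k.succ)|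
        ≤ W * δ := by
      intro i
      have h1 := abs_dotProduct_sub_le (R i) y (fun k => xh k.succ) (D * δ) hyd'
      have h2 := mul_le_mul_of_nonneg_left h1 (abs_nonneg (a i)⁻¹)
      have h3 := mul_le_mul_of_nonneg_right (hWi i) hδ
      rw [abs_mul, abs_mul, abs_of_nonneg hδ]
      simp only [w] at h3
      linarith
    obtain ⟨s, hsu, hsl, hst⟩ := exists_clamp
      (fun i : P => (a i.1)⁻¹ * b i.1 - (a i.1)⁻¹ * (R i.1 ⬝ᵥ y))
      (fun j : N => (a j.1)⁻¹ * b j.1 - (a j.1)⁻¹ * (R j.1 ⬝ᵥ y)) (xh 0) (W * δ)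
      (by positivity)
      (fun i j => by
        have := hy (Sum.inl (i, j))
        simp only [A', b', Sum.elim_inl, sub_dotProduct, smul_dotProduct, smul_eq_mul] at this
        linarith)
      (fun i => by
        have h1 := hxh i.1
        rw [hsplit, hpos i.1 i.2] at h1
        have h2 := hshift i.1
        have h3 := le_abs_self ((a i.1)⁻¹ * δ)
        have h4 := le_abs_self ((a i.1)⁻¹ * (R i.1 ⬝ᵥ y - R i.1 ⬝ᵥ fun k => xh k.succ))
        linarith)
      (fun j => by
        have h1 := hxh j.1
        rw [hsplit, hneg j.1 j.2] at h1
        have h2 := hshift j.1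
        have h3 := neg_le_abs ((a j.1)⁻¹ * δ)
        have h4 := neg_le_abs ((a j.1)⁻¹ * (R j.1 ⬝ᵥ y - R j.1 ⬝ᵥ fun k => xh k.succ))
        linarith)
    refine ⟨Fin.cons s y, fun i => ?_, fun k => ?_⟩
    · rw [hsplit]
      simp only [Fin.cons_zero, Fin.cons_succ]
      rcases lt_trichotomy (a i) 0 with hi | hi | hi
      · have := (hneg i hi s (R i ⬝ᵥ y) 0).2 (by simpa using hsl ⟨i, hi⟩)
        simpa using this
      · have := hy (Sum.inr ⟨i, hi⟩)
        simpa [hi, A', b'] using this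
      · have := (hpos i hi s (R i ⬝ᵥ y) 0).2 (by simpa using hsu ⟨i, hi⟩)
        simpa using this
    · have h1 : 0 ≤ D * δ := by positivity
      have h2 : 0 ≤ W * δ := by positivity
      refine Fin.cases ?_ (fun k => ?_) k
      · simp only [Fin.cons_zero]
        linarith
      · simp only [Fin.cons_succ]
        linarith [hyd' k]

/-- Weak duality for an approximately dual feasible `zh`. -/
lemma approx_weak_duality {m n : ℕ} (M : Matrix (Fin m) (Fin n) ℝ)
    (v : Fin n → ℝ) (f : Fin m → ℝ) (x0 : Fin n → ℝ) (hx0 : ∀ i, f i ≤ M.mulVec x0 i)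
    (ε : ℝ) (zh : Fin m → ℝ) (h1 : ∀ j, |Mᵀ.mulVec zh j - v j| ≤ ε) (h2 : ∀ i, -ε ≤ zh i) :
    f ⬝ᵥ zh ≤ v ⬝ᵥ x0 + ε * (∑ j, |x0 j| + ∑ i, (M.mulVec x0 i - f i)) := by
  have hs : -(ε * ∑ i, (M.mulVec x0 i - f i)) ≤ (M.mulVec x0) ⬝ᵥ zh - f ⬝ᵥ zh := by
    rw [← sub_dotProduct, dotProduct, Finset.mul_sum, ← Finset.sum_neg_distrib]
    refine Finset.sum_le_sum fun i _ => ?_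
    have := mul_le_mul_of_nonneg_left (h2 i) (sub_nonneg.2 (hx0 i))
    simp only [Pi.sub_apply]
    linarith
  have ht : (M.mulVec x0) ⬝ᵥ zh = x0 ⬝ᵥ (Mᵀ.mulVec zh) := by
    rw [mulVec_transpose, dotProduct_comm, dotProduct_mulVec, dotProduct_comm]
  have hd := (abs_le.1 (abs_dotProduct_sub_le x0 (Mᵀ.mulVec zh) v ε h1)).2
  rw [dotProduct_comm v x0]
  linarith

/-- LP stability: if `(P): min v^⊤x s.t. Mx ≥ f` has an optimal solution
`x₀` (with optimal value `v* = v^⊤x₀`), then there is a constant `κ > 0`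
(depending only on `M`, `v`, `f`) such that for every `ε > 0` and every
nearly primal-dual feasible, nearly optimal pair `(x̂, ẑ)`, i.e.
(i) `Mx̂ ≥ f − ε e_m`, (ii) `‖M^⊤ẑ − v‖_∞ ≤ ε` and `ẑ ≥ −ε e_m`, and
(iii) `v^⊤x̂ − f^⊤ẑ ≤ ε`, there exists an optimal solution `x*` of `(P)`
with `‖x* − x̂‖₁ ≤ ε κ`. -/
theorem stmt15 (m n : ℕ) (M : Matrix (Fin m) (Fin n) ℝ)
    (v : Fin n → ℝ) (f : Fin m → ℝ)
    (x0 : Fin n → ℝ) (hx0 : ∀ i, f i ≤ M.mulVec x0 i)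
    (hx0opt : ∀ x : Fin n → ℝ, (∀ i, f i ≤ M.mulVec x i) → v ⬝ᵥ x0 ≤ v ⬝ᵥ x) :
    ∃ κ : ℝ, 0 < κ ∧
      ∀ ε : ℝ, 0 < ε → ∀ xh : Fin n → ℝ, ∀ zh : Fin m → ℝ,
        (∀ i, f i - ε ≤ M.mulVec xh i) →
        (∀ j, |Mᵀ.mulVec zh j - v j| ≤ ε) →
        (∀ i, -ε ≤ zh i) →
        v ⬝ᵥ xh - f ⬝ᵥ zh ≤ ε →
        ∃ xs : Fin n → ℝ,
          (∀ i, f i ≤ M.mulVec xs i) ∧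
          v ⬝ᵥ xs = v ⬝ᵥ x0 ∧
          ∑ j, |xs j - xh j| ≤ ε * κ := by
  classical
  let A : Option (Fin m) → Fin n → ℝ := fun o => o.elim v (fun i => -M i)
  let b : Option (Fin m) → ℝ := fun o => o.elim (v ⬝ᵥ x0) (fun i => -f i)
  have hrow : ∀ i (x : Fin n → ℝ), A (some i) ⬝ᵥ x = -M.mulVec x i := fun i x =>
    neg_dotProduct (M i) x
  obtain ⟨κ, hκ, H⟩ := hoffman n (Option (Fin m)) A b x0 (by
    rintro (_ | i)
    · exact le_rfl
    · rw [hrow]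
      exact neg_le_neg (hx0 i))
  obtain ⟨C, hC⟩ : ∃ C : ℝ, C = ∑ j, |x0 j| + ∑ i, (M.mulVec x0 i - f i) := ⟨_, rfl⟩
  have hC0 : 0 ≤ C := by
    rw [hC]
    exact add_nonneg (Finset.sum_nonneg fun _ _ => abs_nonneg _)
      (Finset.sum_nonneg fun i _ => sub_nonneg.2 (hx0 i))
  -- The factor `n` passes from the maximum norm to the 1-norm; `+ 1` ensures positivity.
  refine ⟨n * (κ * (1 + C)) + 1, by positivity, fun ε hε xh zh h1 h2 h3 h4 => ?_⟩
  have hεC : 0 ≤ ε * C := by positivity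
  obtain ⟨x, hx, hxd⟩ := H (ε * (1 + C)) (by positivity) xh (by
    have hwd := approx_weak_duality M v f x0 hx0 ε zh h2 h3
    rw [← hC] at hwd
    rintro (_ | i)
    · change v ⬝ᵥ xh ≤ v ⬝ᵥ x0 + _
      linarith
    · rw [hrow]
      change _ ≤ -f i + _
      linarith [h1 i])
  have hfeas : ∀ i, f i ≤ M.mulVec x i := fun i => by
    have := hx (some i)
    rw [hrow] at this
    exact neg_le_neg_iff.1 this
  refine ⟨x, hfeas, le_antisymm (hx none) (hx0opt x hfeas), ?_⟩
  calc ∑ j, |x j - xh j| ≤ ∑ _j : Fin n, κ * (ε * (1 + C)) := Finset.sum_le_sum fun j _ => hxd j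
    _ = ε * (n * (κ * (1 + C))) := by simp; ring
    _ ≤ ε * (n * (κ * (1 + C)) + 1) := by linarith
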